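/- arXiv:2006.10581 — 2 statements merged into one kernel-verified Lean document; each statement's English description precedes it below -/
import Mathlib

section
/- Let d ≥ 1, let z be a standard Gaussian vector in ℝ^d, and let a, b ∈ ℝ^d be nonzero vectors with γ := ⟨a, b⟩ / (‖a‖ ‖b‖). Then E[|φ(⟨a, z⟩) − φ(⟨b, z⟩)|²] = (1/2) ‖a − b‖² − ‖a‖ ‖b‖ · (√(1 − γ²) − γ arccos(γ)) / π. -/
open MeasureTheory ProbabilityTheory

/-- The ReLU function. -/
noncomputable def relu (t : ℝ) : ℝ := max t 0

lemma relu_nonneg_mul {r : ℝ} (hr : 0 ≤ r) (t : ℝ) : relu (r * t) = r * relu t := by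
  unfold relu
  rw [mul_max_of_nonneg _ _ hr, mul_zero]

lemma continuous_relu : Continuous relu := by
  unfold relu
  fun_prop

lemma relu_of_nonneg {t : ℝ} (h : 0 ≤ t) : relu t = t := max_eq_left h

lemma relu_of_nonpos {t : ℝ} (h : t ≤ 0) : relu t = 0 := max_eq_right h

/-- The radial integral. -/
lemma radial_integral :
    ∫ r in Set.Ioi (0 : ℝ), r ^ 3 * Real.exp (-r ^ 2 / 2) = 2 := by
  have h := integral_rpow_mul_exp_neg_mul_rpow (p := 2) (q := 3) (b := 1 / 2)
    (by norm_num) (by norm_num) (by norm_num)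
  have e : (((3 : ℝ) + 1) / 2) = ((1 : ℕ) : ℝ) + 1 := by norm_num
  have e2 : (-((3 : ℝ) + 1) / 2) = ((-2 : ℤ) : ℝ) := by norm_num
  rw [e, Real.Gamma_nat_eq_factorial, e2, Real.rpow_intCast] at h
  norm_num at h
  refine Eq.trans ?_ h
  refine integral_congr_ae (Filter.Eventually.of_forall fun r => ?_)
  simp only
  congr 2
  ring

/-- Gaussian integrals of degree two homogeneous functions in the plane. -/
lemma gaussian_homog (F : ℝ × ℝ → ℝ)
    (hF : ∀ r t : ℝ, 0 ≤ r → F (r * Real.cos t, r * Real.sin t)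
      = r ^ 2 * F (Real.cos t, Real.sin t)) :
    ∫ p, F p ∂((gaussianReal 0 1).prod (gaussianReal 0 1)) =
      (1 / Real.pi) * ∫ t in (-Real.pi)..Real.pi, F (Real.cos t, Real.sin t) := by
  rw [gaussianReal_of_var_ne_zero 0 one_ne_zero,
    prod_withDensity (measurable_gaussianPDF 0 1) (measurable_gaussianPDF 0 1),
    integral_withDensity_eq_integral_toReal_smul]
  rotate_left
  · exact ((measurable_gaussianPDF 0 1).comp measurable_fst).mul
      ((measurable_gaussianPDF 0 1).comp measurable_snd)
  · exact Filter.Eventually.of_forall fun p =>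
      ENNReal.mul_lt_top gaussianPDF_lt_top gaussianPDF_lt_top
  rw [← Measure.volume_eq_prod, ← integral_comp_polarCoord_symm]
  have hpi := Real.pi_pos
  have : ∀ p ∈ polarCoord.target,
      p.1 • ((gaussianPDF 0 1 (polarCoord.symm p).1 * gaussianPDF 0 1 (polarCoord.symm p).2).toReal
        • F (polarCoord.symm p)) =
      (p.1 ^ 3 * Real.exp (-p.1 ^ 2 / 2)) *
        ((2 * Real.pi)⁻¹ * F (Real.cos p.2, Real.sin p.2)) := by
    rintro ⟨r, t⟩ hp
    have hr : 0 ≤ r := le_of_lt hp.1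
    simp only [polarCoord_symm_apply, smul_eq_mul, ENNReal.toReal_mul, toReal_gaussianPDF,
      hF r t hr, gaussianPDFReal_def, NNReal.coe_one, mul_one, sub_zero]
    have h1 : Real.exp (-(r * Real.cos t) ^ 2 / 2) * Real.exp (-(r * Real.sin t) ^ 2 / 2)
        = Real.exp (-r ^ 2 / 2) := by
      rw [← Real.exp_add]
      congr 1
      linear_combination (-r ^ 2 / 2) * Real.sin_sq_add_cos_sq t
    have h2 : (√(2 * Real.pi))⁻¹ * (√(2 * Real.pi))⁻¹ = (2 * Real.pi)⁻¹ := by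
      rw [← mul_inv, Real.mul_self_sqrt (by positivity)]
    rw [← h1, ← h2]
    ring
  rw [setIntegral_congr_fun polarCoord.open_target.measurableSet this]
  have ht : polarCoord.target = Set.Ioi (0 : ℝ) ×ˢ Set.Ioo (-Real.pi) Real.pi := rfl
  rw [ht, Measure.volume_eq_prod, setIntegral_prod_mul (fun r : ℝ => r ^ 3 * Real.exp (-r ^ 2 / 2))
    (fun t : ℝ => (2 * Real.pi)⁻¹ * F (Real.cos t, Real.sin t)), radial_integral,
    integral_const_mul, intervalIntegral.integral_of_le (by linarith),
    integral_Ioc_eq_integral_Ioo, ← mul_assoc]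
  congr 1
  field_simp

lemma cos_int (θ u v : ℝ) :
    ∫ t in u..v, Real.cos t * Real.cos (t - θ) =
      (Real.cos θ * v / 2 + Real.sin (2 * v - θ) / 4) -
      (Real.cos θ * u / 2 + Real.sin (2 * u - θ) / 4) := by
  apply intervalIntegral.integral_eq_sub_of_hasDerivAt
    (f := fun t => Real.cos θ * t / 2 + Real.sin (2 * t - θ) / 4)
  · intro t _
    have h1 : HasDerivAt (fun t : ℝ => 2 * t - θ) (2 * 1) t :=
      ((hasDerivAt_id t).const_mul 2).sub_const θ
    have h2 := (((hasDerivAt_id t).const_mul (Real.cos θ)).div_const 2).add (h1.sin.div_const 4)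
    refine h2.congr_deriv ?_
    have e1 : 2 * t - θ = t + (t - θ) := by ring
    have e2 : Real.cos θ = Real.cos (t - (t - θ)) := by ring_nf
    rw [e1, e2, Real.cos_add, Real.cos_sub t (t - θ)]
    ring
  · exact Continuous.intervalIntegrable (by fun_prop) _ _

lemma angular (θ : ℝ) (h0 : 0 ≤ θ) (h1 : θ ≤ Real.pi) :
    ∫ t in (-Real.pi)..Real.pi, relu (Real.cos t) * relu (Real.cos (t - θ)) =
      (Real.sin θ + (Real.pi - θ) * Real.cos θ) / 2 := by
  have hpi := Real.pi_pos
  have hc : Continuous fun t : ℝ => relu (Real.cos t) * relu (Real.cos (t - θ)) :=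
    (continuous_relu.comp Real.continuous_cos).mul
      (continuous_relu.comp (Real.continuous_cos.comp (continuous_id.sub continuous_const)))
  have hi : ∀ u v : ℝ, IntervalIntegrable
      (fun t : ℝ => relu (Real.cos t) * relu (Real.cos (t - θ))) volume u v :=
    fun u v => hc.intervalIntegrable u v
  rw [← intervalIntegral.integral_add_adjacent_intervals (hi (-Real.pi) (-(Real.pi / 2)))
      (hi _ Real.pi),
    ← intervalIntegral.integral_add_adjacent_intervals (hi (-(Real.pi / 2)) (θ - Real.pi / 2))
      (hi _ Real.pi),
    ← intervalIntegral.integral_add_adjacent_intervals (hi (θ - Real.pi / 2) (Real.pi / 2))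
      (hi _ Real.pi)]
  have i1 : ∫ t in (-Real.pi)..(-(Real.pi / 2)), relu (Real.cos t) * relu (Real.cos (t - θ)) = 0 := by
    rw [intervalIntegral.integral_congr (g := fun _ => 0), intervalIntegral.integral_zero]
    intro t ht
    rw [Set.uIcc_of_le (by linarith)] at ht
    have : Real.cos t ≤ 0 := by
      rw [← Real.cos_neg]
      exact Real.cos_nonpos_of_pi_div_two_le_of_le (by linarith [ht.2]) (by linarith [ht.1])
    simp [relu_of_nonpos this]
  have i2 : ∫ t in (-(Real.pi / 2))..(θ - Real.pi / 2),
      relu (Real.cos t) * relu (Real.cos (t - θ)) = 0 := by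
    rw [intervalIntegral.integral_congr (g := fun _ => 0), intervalIntegral.integral_zero]
    intro t ht
    rw [Set.uIcc_of_le (by linarith)] at ht
    have : Real.cos (t - θ) ≤ 0 := by
      rw [← Real.cos_neg]
      exact Real.cos_nonpos_of_pi_div_two_le_of_le (by linarith [ht.2]) (by linarith [ht.1])
    simp [relu_of_nonpos this]
  have i4 : ∫ t in (Real.pi / 2)..Real.pi, relu (Real.cos t) * relu (Real.cos (t - θ)) = 0 := by
    rw [intervalIntegral.integral_congr (g := fun _ => 0), intervalIntegral.integral_zero]
    intro t ht
    rw [Set.uIcc_of_le (by linarith)] at ht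
    have : Real.cos t ≤ 0 :=
      Real.cos_nonpos_of_pi_div_two_le_of_le (by linarith [ht.1]) (by linarith [ht.2])
    simp [relu_of_nonpos this]
  have i3 : ∫ t in (θ - Real.pi / 2)..(Real.pi / 2),
      relu (Real.cos t) * relu (Real.cos (t - θ)) =
      ∫ t in (θ - Real.pi / 2)..(Real.pi / 2), Real.cos t * Real.cos (t - θ) := by
    apply intervalIntegral.integral_congr
    intro t ht
    rw [Set.uIcc_of_le (by linarith)] at ht
    have c1 : 0 ≤ Real.cos t :=
      Real.cos_nonneg_of_neg_pi_div_two_le_of_le (by linarith [ht.1]) (by linarith [ht.2])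
    have c2 : 0 ≤ Real.cos (t - θ) :=
      Real.cos_nonneg_of_neg_pi_div_two_le_of_le (by linarith [ht.1]) (by linarith [ht.2])
    simp only [relu_of_nonneg c1, relu_of_nonneg c2]
  rw [i1, i2, i3, i4, cos_int]
  have e1 : 2 * (Real.pi / 2) - θ = Real.pi - θ := by ring
  have e2 : 2 * (θ - Real.pi / 2) - θ = -(Real.pi - θ) := by ring
  rw [e1, e2, Real.sin_neg, Real.sin_pi_sub]
  ring

lemma angular_self :
    ∫ t in (-Real.pi)..Real.pi, relu (Real.cos t) ^ 2 = Real.pi / 2 := by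
  have h := angular 0 le_rfl Real.pi_pos.le
  simp only [sub_zero, Real.sin_zero, Real.cos_zero, zero_add, mul_one] at h
  rw [← h]
  simp_rw [pow_two]

lemma angular_shift (θ : ℝ) :
    ∫ t in (-Real.pi)..Real.pi, relu (Real.cos (t - θ)) ^ 2 = Real.pi / 2 := by
  rw [intervalIntegral.integral_comp_sub_right (fun t => relu (Real.cos t) ^ 2) θ, ← angular_self]
  have hp : Function.Periodic (fun t : ℝ => relu (Real.cos t) ^ 2) (2 * Real.pi) := by
    intro t
    simp only [Real.cos_add_two_pi]
  have := hp.intervalIntegral_add_eq (-Real.pi - θ) (-Real.pi)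
  have e1 : -Real.pi - θ + 2 * Real.pi = Real.pi - θ := by ring
  have e2 : -Real.pi + 2 * Real.pi = Real.pi := by ring
  rwa [e1, e2] at this

/-- The planar computation. -/
lemma planar (A B θ : ℝ) (hA : 0 ≤ A) (hB : 0 ≤ B) (h0 : 0 ≤ θ) (h1 : θ ≤ Real.pi) :
    ∫ p : ℝ × ℝ, (relu (A * p.1) - relu (B * (Real.cos θ * p.1 + Real.sin θ * p.2))) ^ 2
      ∂((gaussianReal 0 1).prod (gaussianReal 0 1)) =
    (A ^ 2 + B ^ 2) / 2 -
      A * B * (Real.sin θ + (Real.pi - θ) * Real.cos θ) / Real.pi := by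
  have hpi := Real.pi_pos
  rw [gaussian_homog]
  · have : ∀ t : ℝ, (relu (A * Real.cos t) -
        relu (B * (Real.cos θ * Real.cos t + Real.sin θ * Real.sin t))) ^ 2 =
        A ^ 2 * relu (Real.cos t) ^ 2 + B ^ 2 * relu (Real.cos (t - θ)) ^ 2 -
        (2 * A * B) * (relu (Real.cos t) * relu (Real.cos (t - θ))) := by
      intro t
      rw [relu_nonneg_mul hA, relu_nonneg_mul hB, Real.cos_sub,
        mul_comm (Real.cos θ), mul_comm (Real.sin θ)]
      ring
    simp only [this]
    have c1 : Continuous fun t : ℝ => relu (Real.cos t) := continuous_relu.comp Real.continuous_cos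
    have c2 : Continuous fun t : ℝ => relu (Real.cos (t - θ)) :=
      continuous_relu.comp (Real.continuous_cos.comp (continuous_id.sub continuous_const))
    rw [intervalIntegral.integral_sub, intervalIntegral.integral_add,
      intervalIntegral.integral_const_mul, intervalIntegral.integral_const_mul,
      intervalIntegral.integral_const_mul, angular_self, angular_shift, angular θ h0 h1]
    · field_simp
    all_goals exact Continuous.intervalIntegrable (by fun_prop) _ _
  · intro r t hr
    have e1 : A * (r * Real.cos t) = r * (A * Real.cos t) := by ring
    have e2 : B * (Real.cos θ * (r * Real.cos t) + Real.sin θ * (r * Real.sin t)) =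
      r * (B * (Real.cos θ * Real.cos t + Real.sin θ * Real.sin t)) := by ring
    simp only
    rw [e1, e2, relu_nonneg_mul hr, relu_nonneg_mul hr]
    ring

lemma gauss_char (t : ℝ) :
    ∫ x : ℝ, Complex.exp (((t * x : ℝ) : ℂ) * Complex.I) ∂(gaussianReal 0 1) =
      Complex.exp (((-(t ^ 2) / 2 : ℝ) : ℂ)) := by
  have h := charFun_gaussianReal (μ := 0) (v := 1) t
  rw [charFun_apply_real] at h
  push_cast
  rw [h]
  congr 1
  simp
  ring

lemma pi_char (d : ℕ) (c : Fin d → ℝ) :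
    ∫ z : Fin d → ℝ, Complex.exp (((∑ i, c i * z i : ℝ) : ℂ) * Complex.I)
      ∂(Measure.pi fun _ : Fin d => gaussianReal 0 1) =
      Complex.exp (((-(∑ i, c i ^ 2) / 2 : ℝ) : ℂ)) := by
  have : ∀ z : Fin d → ℝ, Complex.exp (((∑ i, c i * z i : ℝ) : ℂ) * Complex.I) =
      ∏ i, Complex.exp (((c i * z i : ℝ) : ℂ) * Complex.I) := by
    intro z
    rw [← Complex.exp_sum, Complex.ofReal_sum, Finset.sum_mul]
  simp_rw [this]
  rw [integral_fintype_prod_eq_prod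
    (f := fun i x => Complex.exp (((c i * x : ℝ) : ℂ) * Complex.I))]
  simp_rw [gauss_char]
  rw [← Complex.exp_sum, ← Complex.ofReal_sum, ← Finset.sum_div, Finset.sum_neg_distrib]

lemma prod_char (p q : ℝ) :
    ∫ z : ℝ × ℝ, Complex.exp (((p * z.1 + q * z.2 : ℝ) : ℂ) * Complex.I)
      ∂((gaussianReal 0 1).prod (gaussianReal 0 1)) =
      Complex.exp (((-(p ^ 2 + q ^ 2) / 2 : ℝ) : ℂ)) := by
  have : ∀ z : ℝ × ℝ, Complex.exp (((p * z.1 + q * z.2 : ℝ) : ℂ) * Complex.I) =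
      Complex.exp (((p * z.1 : ℝ) : ℂ) * Complex.I) *
      Complex.exp (((q * z.2 : ℝ) : ℂ) * Complex.I) := by
    intro z
    rw [← Complex.exp_add, Complex.ofReal_add, add_mul]
  simp_rw [this]
  rw [integral_prod_mul (fun x : ℝ => Complex.exp (((p * x : ℝ) : ℂ) * Complex.I))
    (fun x : ℝ => Complex.exp (((q * x : ℝ) : ℂ) * Complex.I)), gauss_char, gauss_char,
    ← Complex.exp_add, ← Complex.ofReal_add]
  congr 2
  ring

lemma law_eq (d : ℕ) (a b : Fin d → ℝ) (A B c s : ℝ)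
    (hA : ∑ i, a i ^ 2 = A ^ 2) (hB : ∑ i, b i ^ 2 = B ^ 2) (hcs : c ^ 2 + s ^ 2 = 1)
    (hab : ∑ i, a i * b i = A * B * c) :
    (Measure.pi fun _ : Fin d => gaussianReal 0 1).map
      (fun z => ((∑ i, a i * z i, ∑ i, b i * z i) : ℝ × ℝ)) =
    ((gaussianReal 0 1).prod (gaussianReal 0 1)).map
      (fun p : ℝ × ℝ => ((A * p.1, B * (c * p.1 + s * p.2)) : ℝ × ℝ)) := by
  have m1 : Measurable (fun z : Fin d → ℝ => ((∑ i, a i * z i, ∑ i, b i * z i) : ℝ × ℝ)) := by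
    fun_prop
  have m2 : Measurable
      (fun p : ℝ × ℝ => ((A * p.1, B * (c * p.1 + s * p.2)) : ℝ × ℝ)) := by fun_prop
  have := Measure.isProbabilityMeasure_map
    (μ := Measure.pi fun _ : Fin d => gaussianReal 0 1) m1.aemeasurable
  have := Measure.isProbabilityMeasure_map
    (μ := (gaussianReal 0 1).prod (gaussianReal 0 1)) m2.aemeasurable
  apply Measure.ext_of_charFunDual
  ext L
  obtain ⟨p, q, hL⟩ : ∃ p q : ℝ, ∀ x y : ℝ, L (x, y) = p * x + q * y := by
    refine ⟨L (1, 0), L (0, 1), fun x y => ?_⟩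
    have : ((x, y) : ℝ × ℝ) = x • ((1, 0) : ℝ × ℝ) + y • ((0, 1) : ℝ × ℝ) := by simp
    rw [this, map_add, map_smul, map_smul, smul_eq_mul, smul_eq_mul]
    ring
  have hLm : Measurable fun v : ℝ × ℝ => Complex.exp (((L v : ℝ) : ℂ) * Complex.I) := by
    have := L.continuous
    exact Continuous.measurable (by fun_prop)
  rw [charFunDual_apply, charFunDual_apply, integral_map m1.aemeasurable hLm.aestronglyMeasurable,
    integral_map m2.aemeasurable hLm.aestronglyMeasurable]
  simp only [hL]
  have r1 : ∀ z : Fin d → ℝ, p * ∑ i, a i * z i + q * ∑ i, b i * z i =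
      ∑ i, (p * a i + q * b i) * z i := by
    intro z
    rw [Finset.mul_sum, Finset.mul_sum, ← Finset.sum_add_distrib]
    exact Finset.sum_congr rfl fun i _ => by ring
  have r2 : ∀ z : ℝ × ℝ, p * (A * z.1) + q * (B * (c * z.1 + s * z.2)) =
      (p * A + q * B * c) * z.1 + (q * B * s) * z.2 := by
    intro z; ring
  simp only [r1, r2]
  rw [pi_char, prod_char]
  have : ∑ i, (p * a i + q * b i) ^ 2 =
      p ^ 2 * ∑ i, a i ^ 2 + 2 * p * q * ∑ i, a i * b i + q ^ 2 * ∑ i, b i ^ 2 := by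
    rw [Finset.mul_sum, Finset.mul_sum, Finset.mul_sum, ← Finset.sum_add_distrib,
      ← Finset.sum_add_distrib]
    exact Finset.sum_congr rfl fun i _ => by ring
  rw [this, hA, hB, hab]
  congr 2
  linear_combination (q ^ 2 * B ^ 2 / 2) * hcs

/-- second moment of the difference of two rectified Gaussian linear forms. -/
theorem relu_diff_sq_moment (d : ℕ) (hd : 1 ≤ d) (a b : Fin d → ℝ)
    (ha : a ≠ 0) (hb : b ≠ 0) (γ : ℝ)
    (hγ : γ = (∑ i, a i * b i) /
      (Real.sqrt (∑ i, a i ^ 2) * Real.sqrt (∑ i, b i ^ 2))) :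
    (∫ z : Fin d → ℝ, (relu (∑ i, a i * z i) - relu (∑ i, b i * z i)) ^ 2
        ∂(Measure.pi fun _ : Fin d => gaussianReal 0 1)) =
      (1 / 2) * (∑ i, (a i - b i) ^ 2) -
        Real.sqrt (∑ i, a i ^ 2) * Real.sqrt (∑ i, b i ^ 2) *
          ((Real.sqrt (1 - γ ^ 2) - γ * Real.arccos γ) / Real.pi) := by
  have pos : ∀ v : Fin d → ℝ, v ≠ 0 → 0 < ∑ i, v i ^ 2 := by
    intro v hv
    obtain ⟨i, hi⟩ := Function.ne_iff.mp hv
    exact Finset.sum_pos' (fun j _ => sq_nonneg _)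
      ⟨i, Finset.mem_univ _, by have : v i ≠ 0 := hi; positivity⟩
  have hA2 := Real.sq_sqrt (pos a ha).le
  have hB2 := Real.sq_sqrt (pos b hb).le
  have hA := Real.sqrt_pos.mpr (pos a ha)
  have hB := Real.sqrt_pos.mpr (pos b hb)
  set A := Real.sqrt (∑ i, a i ^ 2)
  set B := Real.sqrt (∑ i, b i ^ 2)
  have hab : ∑ i, a i * b i = A * B * γ := by
    rw [hγ]
    field_simp
  have hcs := Finset.sum_mul_sq_le_sq_mul_sq Finset.univ a b
  have hγ1 : γ ^ 2 ≤ 1 := by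
    rw [hab, ← hA2, ← hB2] at hcs
    have hp : 0 < A ^ 2 * B ^ 2 := by positivity
    by_contra hlt
    push Not at hlt
    nlinarith
  obtain ⟨g1, g2⟩ := abs_le.mp ((sq_le_one_iff_abs_le_one γ).mp hγ1)
  have hc : Real.cos (Real.arccos γ) = γ := Real.cos_arccos g1 g2
  have hs : Real.sin (Real.arccos γ) = Real.sqrt (1 - γ ^ 2) := Real.sin_arccos γ
  have hlaw := law_eq d a b A B (Real.cos (Real.arccos γ)) (Real.sin (Real.arccos γ))
    hA2.symm hB2.symm (Real.cos_sq_add_sin_sq _) (by rw [hc]; exact hab)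
  have hm : Measurable fun p : ℝ × ℝ => (relu p.1 - relu p.2) ^ 2 := by
    have := continuous_relu
    exact Continuous.measurable (by fun_prop)
  have hint := congrArg (fun μ : Measure (ℝ × ℝ) => ∫ p, (relu p.1 - relu p.2) ^ 2 ∂μ) hlaw
  rw [integral_map (Measurable.aemeasurable (by fun_prop)) hm.aestronglyMeasurable,
    integral_map (Measurable.aemeasurable (by fun_prop)) hm.aestronglyMeasurable,
    planar A B _ hA.le hB.le (Real.arccos_nonneg γ) (Real.arccos_le_pi γ)] at hint
  rw [hint, hc, hs]
  have hd2 : ∑ i, (a i - b i) ^ 2 = A ^ 2 - 2 * (A * B * γ) + B ^ 2 := by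
    rw [hA2, hB2, ← hab, Finset.mul_sum, ← Finset.sum_sub_distrib, ← Finset.sum_add_distrib]
    exact Finset.sum_congr rfl fun i _ => by ring
  rw [hd2]
  have hpi := Real.pi_pos
  field_simp
  ring
end

section
/- In the linear transfer learning model (d, k ≥ 1, σ > 0, Σ_T ∈ ℝ^{d×d} positive definite with A_T A_Tᵀ = Σ_T; for W ∈ ℝ^{k×d}, Q_W is the law on ℝ^d × ℝ^k of (A_T z, W A_T z + σ w) with (z, w) a standard Gaussian vector in ℝ^{d+k}; P_W the analogous source law with positive semidefinite Σ_S; ρ(W₁, W₂) := √(trace((W₁ − W₂) Σ_T (W₁ − W₂)ᵀ)); D := d·k − 1), assume D ≥ 20, n_S, n_T ≥ 1, and 0 < Δ < √(σ²D·log 2 / n_T). Then for every measurable estimator Ŵ : ((ℝ^d × ℝ^k)^{n_S}) × ((ℝ^d × ℝ^k)^{n_T}) → ℝ^{k×d}, the supremum over all pairs (W_S, W_T) with ρ(W_S, W_T) ≤ Δ of E_{s ∼ P_{W_S}^{⊗n_S}, t ∼ Q_{W_T}^{⊗n_T}}[ ρ(Ŵ(s,t), W_T)² ] is at least (1/100)·Δ²·(1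 − 0.8·n_T Δ² / (σ²D)). -/
open MeasureTheory ProbabilityTheory Matrix

/-- The transfer distance `ρ(W₁, W₂) = ‖Σ_T^{1/2}(W₁ − W₂)ᵀ‖_F`. -/
noncomputable def rho {k d : ℕ} (SigT : Matrix (Fin d) (Fin d) ℝ)
    (W1 W2 : Matrix (Fin k) (Fin d) ℝ) : ℝ :=
  Real.sqrt ((W1 - W2) * SigT * (W1 - W2)ᵀ).trace

/-- The joint law of `(A z, W A z + σ w)` where `(z, w)` is a standard Gaussian vector in
`ℝ^{d+k}`. -/
noncomputable def linLaw (d k : ℕ) (σ : ℝ) (A : Matrix (Fin d) (Fin d) ℝ)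
    (W : Matrix (Fin k) (Fin d) ℝ) : Measure ((Fin d → ℝ) × (Fin k → ℝ)) :=
  Measure.map
    (fun zw : (Fin d → ℝ) × (Fin k → ℝ) =>
      (A.mulVec zw.1, W.mulVec (A.mulVec zw.1) + σ • zw.2))
    ((Measure.pi fun _ : Fin d => gaussianReal 0 1).prod
      (Measure.pi fun _ : Fin k => gaussianReal 0 1))


lemma lintegral_pi_prod {ι : Type*} [Fintype ι] {X : ι → Type*} [∀ i, MeasurableSpace (X i)]
    (μ : ∀ i, Measure (X i)) [∀ i, IsProbabilityMeasure (μ i)]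
    (f : ∀ i, X i → ENNReal) (hf : ∀ i, Measurable (f i)) :
    ∫⁻ x, ∏ i, f i (x i) ∂(Measure.pi μ) = ∏ i, ∫⁻ x, f i x ∂(μ i) := by
  have h := iIndepFun_pi (μ := μ) (X := f) (fun i => (hf i).aemeasurable)
  have h2 := lintegral_prod_eq_prod_lintegral_of_indepFun Finset.univ (fun i (x : ∀ i, X i) => f i (x i)) h
    (fun i => (hf i).comp (measurable_pi_apply i))
  refine h2.trans (Finset.prod_congr rfl fun i _ => ?_)
  exact (measurePreserving_eval μ i).lintegral_comp (hf i)

lemma pi_withDensity_aux {ι : Type*} [Fintype ι] {X : ι → Type*} [∀ i, MeasurableSpace (X i)]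
    (μ : ∀ i, Measure (X i)) [∀ i, IsProbabilityMeasure (μ i)]
    (f : ∀ i, X i → ENNReal) (hf : ∀ i, Measurable (f i))
    [∀ i, IsProbabilityMeasure ((μ i).withDensity (f i))] :
    Measure.pi (fun i => (μ i).withDensity (f i)) =
      (Measure.pi μ).withDensity (fun x => ∏ i, f i (x i)) := by
  refine Measure.pi_eq fun s hs => ?_
  rw [withDensity_apply _ (MeasurableSet.univ_pi hs), ← lintegral_indicator (MeasurableSet.univ_pi hs)]
  have : (Set.univ.pi s).indicator (fun x => ∏ i, f i (x i)) =
      fun x => ∏ i, (s i).indicator (f i) (x i) := by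
    classical
    ext x
    by_cases hx : x ∈ Set.univ.pi s
    · rw [Set.indicator_of_mem hx]
      exact Finset.prod_congr rfl fun i _ => (Set.indicator_of_mem (hx i trivial) _).symm
    · rw [Set.indicator_of_notMem hx]
      simp only [Set.mem_pi, Set.mem_univ, true_imp_iff, not_forall] at hx
      obtain ⟨i, hi⟩ := hx
      exact (Finset.prod_eq_zero (Finset.mem_univ i) (Set.indicator_of_notMem hi _)).symm
  rw [this, lintegral_pi_prod μ _ (fun i => (hf i).indicator (hs i))]
  refine Finset.prod_congr rfl fun i _ => ?_
  rw [lintegral_indicator (hs i), withDensity_apply _ (hs i)]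

lemma gauss_shift (m : ℝ) : gaussianReal m 1 =
    (gaussianReal 0 1).withDensity (fun x => ENNReal.ofReal (Real.exp (m * x - m ^ 2 / 2))) := by
  rw [gaussianReal_of_var_ne_zero _ one_ne_zero, gaussianReal_of_var_ne_zero _ one_ne_zero,
    ← withDensity_mul _ (by fun_prop) (by fun_prop)]
  congr 1
  ext x
  simp only [Pi.mul_apply, gaussianPDF]
  rw [← ENNReal.ofReal_mul (gaussianPDFReal_nonneg _ _ _)]
  simp only [gaussianPDFReal, mul_assoc, ← Real.exp_add]
  congr 4
  simp; ring

lemma pi_gauss_shift {k : ℕ} (v : Fin k → ℝ) :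
    (Measure.pi fun _ : Fin k => gaussianReal 0 1).map (fun w => w + v) =
    (Measure.pi fun _ : Fin k => gaussianReal 0 1).withDensity
      (fun w => ∏ i, ENNReal.ofReal (Real.exp (v i * w i - v i ^ 2 / 2))) := by
  have hp : ∀ i, IsProbabilityMeasure ((gaussianReal 0 1).withDensity
      (fun x => ENNReal.ofReal (Real.exp (v i * x - v i ^ 2 / 2)))) := fun i => by
    rw [← gauss_shift]; infer_instance
  rw [← pi_withDensity_aux _ (fun i x => ENNReal.ofReal (Real.exp (v i * x - v i ^ 2 / 2)))
    (by fun_prop)]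
  simp only [← gauss_shift]
  have := Measure.pi_map_pi (μ := fun _ : Fin k => gaussianReal 0 1) (f := fun i x => x + v i)
    (hμ := fun i => by simp only [gaussianReal_map_add_const]; infer_instance) (by fun_prop)
  simp only [gaussianReal_map_add_const, zero_add] at this
  exact this

noncomputable def gam (d k : ℕ) : Measure ((Fin d → ℝ) × (Fin k → ℝ)) :=
  (Measure.pi fun _ : Fin d => gaussianReal 0 1).prod (Measure.pi fun _ : Fin k => gaussianReal 0 1)

instance (d k : ℕ) : IsProbabilityMeasure (gam d k) := by unfold gam; infer_instance

def shiftMap {d k : ℕ} (i : Fin k) (j : Fin d) (a : ℝ) (p : (Fin d → ℝ) × (Fin k → ℝ)) :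
    (Fin d → ℝ) × (Fin k → ℝ) := (p.1, p.2 + Pi.single i (a * p.1 j))

lemma measurable_shiftMap {d k : ℕ} (i : Fin k) (j : Fin d) (a : ℝ) :
    Measurable (shiftMap i j a) := by
  unfold shiftMap
  refine measurable_fst.prodMk (measurable_snd.add ?_)
  refine measurable_pi_lambda _ fun l => ?_
  by_cases h : l = i
  · subst h; simp only [Pi.single_eq_same]; fun_prop
  · simp only [Pi.single_eq_of_ne h]; fun_prop

noncomputable def dens {d k : ℕ} (i : Fin k) (j : Fin d) (a : ℝ) (p : (Fin d → ℝ) × (Fin k → ℝ)) :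
    ENNReal := ENNReal.ofReal (Real.exp (a * p.1 j * p.2 i - (a * p.1 j) ^ 2 / 2))

lemma measurable_dens {d k : ℕ} (i : Fin k) (j : Fin d) (a : ℝ) :
    Measurable (dens i j a) := by
  unfold dens; fun_prop

lemma gam_shift {d k : ℕ} (i : Fin k) (j : Fin d) (a : ℝ) :
    (gam d k).map (shiftMap i j a) = (gam d k).withDensity (dens i j a) := by
  refine Measure.ext_of_lintegral _ fun f hf => ?_
  rw [lintegral_map hf (measurable_shiftMap i j a),
    lintegral_withDensity_eq_lintegral_mul _ (measurable_dens i j a) hf, gam,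
    lintegral_prod (fun p => f (shiftMap i j a p)) (hf.comp (measurable_shiftMap i j a)).aemeasurable,
    lintegral_prod _ ((measurable_dens i j a).mul hf).aemeasurable]
  refine lintegral_congr fun z => ?_
  have hfz : Measurable fun w => f (z, w) := hf.comp (by fun_prop)
  have h1 := lintegral_map (μ := Measure.pi fun _ : Fin k => gaussianReal 0 1)
    (g := fun w => w + Pi.single i (a * z j)) hfz (by fun_prop)
  rw [pi_gauss_shift, lintegral_withDensity_eq_lintegral_mul _ (by fun_prop) hfz] at h1
  simp only [shiftMap]
  rw [← h1]
  refine lintegral_congr fun w => ?_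
  simp only [Pi.mul_apply, dens]
  rw [Finset.prod_eq_single i]
  · simp
  · intro b _ hb; simp [Pi.single_eq_of_ne hb]
  · simp

lemma pi_gam_shift {d k : ℕ} (n : ℕ) (i : Fin k) (j : Fin d) (a : ℝ)
    (f : (Fin n → (Fin d → ℝ) × (Fin k → ℝ)) → ENNReal) (hf : Measurable f) :
    ∫⁻ p, f (fun l => shiftMap i j a (p l)) ∂(Measure.pi fun _ : Fin n => gam d k) =
    ∫⁻ p, (∏ l, dens i j a (p l)) * f p ∂(Measure.pi fun _ : Fin n => gam d k) := by
  have hm := measurable_shiftMap i j a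
  have hdm := measurable_dens i j a
  have hp : IsProbabilityMeasure ((gam d k).map (shiftMap i j a)) :=
    Measure.isProbabilityMeasure_map hm.aemeasurable
  have hp' : IsProbabilityMeasure ((gam d k).withDensity (dens i j a)) := by
    rw [← gam_shift]; exact hp
  have h := Measure.pi_map_pi (μ := fun _ : Fin n => gam d k) (f := fun _ => shiftMap i j a)
    (fun _ => hm.aemeasurable)
  rw [← lintegral_map (g := fun p : Fin n → (Fin d → ℝ) × (Fin k → ℝ) => fun l => shiftMap i j a (p l))
    hf (by fun_prop), h]
  simp only [gam_shift]
  rw [pi_withDensity_aux _ _ (fun _ => hdm), lintegral_withDensity_eq_lintegral_mul _ (by fun_prop) hf]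
  rfl

lemma lintegral_sq_gauss : ∫⁻ x, ENNReal.ofReal (x ^ 2) ∂(gaussianReal 0 1) = 1 := by
  have hv := variance_fun_id_gaussianReal (μ := 0) (v := 1)
  rw [variance_eq_integral (by fun_prop)] at hv
  simp only [integral_id_gaussianReal, sub_zero] at hv
  have hi : Integrable (fun x : ℝ => x ^ 2) (gaussianReal 0 1) :=
    (memLp_id_gaussianReal (μ := 0) (v := 1) 2).integrable_sq
  rw [← ofReal_integral_eq_lintegral_ofReal hi (ae_of_all _ fun x => sq_nonneg x), hv]
  simp

lemma lintegral_sq_gam {d k : ℕ} (j : Fin d) :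
    ∫⁻ p, ENNReal.ofReal (p.1 j ^ 2) ∂(gam d k) = 1 := by
  have h1 : MeasurePreserving (fun p : (Fin d → ℝ) × (Fin k → ℝ) => p.1) (gam d k)
    (Measure.pi fun _ : Fin d => gaussianReal 0 1) := measurePreserving_fst
  have h2 := (measurePreserving_eval (fun _ : Fin d => gaussianReal 0 1) j).comp h1
  have := h2.lintegral_comp (f := fun x => ENNReal.ofReal (x ^ 2)) (by fun_prop)
  exact this.trans lintegral_sq_gauss

noncomputable def rr {d k : ℕ} {n : ℕ} (i : Fin k) (j : Fin d) (a : ℝ)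
    (p : Fin n → (Fin d → ℝ) × (Fin k → ℝ)) : ℝ :=
  Real.exp (∑ l, (a * (p l).1 j * (p l).2 i / 2 - (a * (p l).1 j) ^ 2 / 4))

lemma measurable_rr {d k : ℕ} {n : ℕ} (i : Fin k) (j : Fin d) (a : ℝ) :
    Measurable (rr (n := n) i j a) := by
  unfold rr; fun_prop

lemma prod_dens {d k : ℕ} {n : ℕ} (i : Fin k) (j : Fin d) (a : ℝ)
    (p : Fin n → (Fin d → ℝ) × (Fin k → ℝ)) :
    ∏ l, dens i j a (p l) = ENNReal.ofReal (rr i j a p ^ 2) := by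
  simp only [dens, rr]
  rw [← ENNReal.ofReal_prod_of_nonneg (fun _ _ => (Real.exp_pos _).le), ← Real.exp_sum,
    ← Real.exp_nat_mul, Finset.mul_sum]
  congr 3
  ext l; push_cast; ring

lemma affinity {d k : ℕ} (n : ℕ) (i : Fin k) (j : Fin d) (a : ℝ) :
    ENNReal.ofReal (1 - n * a ^ 2 / 8) ≤
      ∫⁻ p, ENNReal.ofReal (rr i j a p) ∂(Measure.pi fun _ : Fin n => gam d k) := by
  let q : (Fin n → (Fin d → ℝ) × (Fin k → ℝ)) → ℝ := fun p => ∑ l, a ^ 2 / 8 * (p l).1 j ^ 2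
  have hq : Measurable q := by fun_prop
  have hq0 : ∀ p, 0 ≤ q p := fun p => Finset.sum_nonneg fun l _ => by positivity
  have h1 : ∫⁻ p, ENNReal.ofReal (rr i j a p) ∂(Measure.pi fun _ : Fin n => gam d k) =
      ∫⁻ p, ENNReal.ofReal (Real.exp (- q p)) ∂(Measure.pi fun _ : Fin n => gam d k) := by
    have := pi_gam_shift n i j (a / 2) (fun p => ENNReal.ofReal (Real.exp (- q p))) (by fun_prop)
    have h' : ∀ p, q (fun l => shiftMap i j (a / 2) (p l)) = q p := fun p => rfl
    simp only [h'] at this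
    rw [this]
    refine lintegral_congr fun p => ?_
    rw [prod_dens, ← ENNReal.ofReal_mul (by positivity)]
    simp only [rr, q]
    rw [← Real.exp_nat_mul, ← Real.exp_add, Finset.mul_sum, ← Finset.sum_neg_distrib,
      ← Finset.sum_add_distrib]
    congr 3
    ext l; push_cast; ring
  have h2 : ∫⁻ p, ENNReal.ofReal (q p) ∂(Measure.pi fun _ : Fin n => gam d k) =
      ENNReal.ofReal (n * a ^ 2 / 8) := by
    simp only [q]
    simp_rw [ENNReal.ofReal_sum_of_nonneg (s := Finset.univ) (fun l _ =>
      mul_nonneg (by positivity : (0:ℝ) ≤ a ^ 2 / 8) (sq_nonneg _))]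
    rw [lintegral_finsetSum _ (by fun_prop)]
    have : ∀ l : Fin n, ∫⁻ p, ENNReal.ofReal (a ^ 2 / 8 * (p l).1 j ^ 2)
        ∂(Measure.pi fun _ : Fin n => gam d k) = ENNReal.ofReal (a ^ 2 / 8) := fun l => by
      have := (measurePreserving_eval (fun _ : Fin n => gam d k) l).lintegral_comp
        (f := fun x => ENNReal.ofReal (a ^ 2 / 8 * x.1 j ^ 2)) (by fun_prop)
      refine this.trans ?_
      simp_rw [ENNReal.ofReal_mul (by positivity : (0:ℝ) ≤ a ^ 2 / 8)]
      rw [lintegral_const_mul _ (by fun_prop), lintegral_sq_gam, mul_one]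
    simp only [this, Finset.sum_const, Finset.card_univ, Fintype.card_fin, nsmul_eq_mul]
    rw [← ENNReal.ofReal_natCast, ← ENNReal.ofReal_mul (by positivity)]
    congr 1; ring
  rw [h1, ENNReal.ofReal_sub _ (by positivity), tsub_le_iff_right, ← h2,
    ← lintegral_add_left (by fun_prop)]
  calc ENNReal.ofReal 1 = ∫⁻ _, 1 ∂(Measure.pi fun _ : Fin n => gam d k) := by simp
    _ ≤ _ := by
      refine lintegral_mono fun p => ?_
      simp only
      rw [← ENNReal.ofReal_add (Real.exp_pos _).le (hq0 p), ← ENNReal.ofReal_one]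
      exact ENNReal.ofReal_le_ofReal (by linarith [Real.add_one_le_exp (- q p)])

lemma two_point_gam {d k : ℕ} (n : ℕ) (i : Fin k) (j : Fin d) (a C : ℝ) (hC : 0 ≤ C)
    (f g : (Fin n → (Fin d → ℝ) × (Fin k → ℝ)) → ℝ) (hf : Measurable f) (hg : Measurable g)
    (hf0 : ∀ p, 0 ≤ f p) (hg0 : ∀ p, 0 ≤ g p) (hfg : ∀ p, C ≤ f p + g p) :
    ENNReal.ofReal (C * (1 / 2 - 3 / 32 * (n * a ^ 2))) ≤
      ∫⁻ p, ENNReal.ofReal (f p) ∂(Measure.pi fun _ : Fin n => gam d k) +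
      ∫⁻ p, ENNReal.ofReal (g (fun l => shiftMap i j a (p l)))
        ∂(Measure.pi fun _ : Fin n => gam d k) := by
  have hr := measurable_rr (n := n) i j a
  have hone := pi_gam_shift n i j a (fun _ => 1) (by fun_prop)
  simp only [prod_dens, mul_one, lintegral_const, measure_univ] at hone
  rw [pi_gam_shift n i j a (fun p => ENNReal.ofReal (g p)) (by fun_prop)]
  simp only [prod_dens]
  have key : ∫⁻ p, ENNReal.ofReal (3 / 4 * C) * ENNReal.ofReal (rr i j a p)
        ∂(Measure.pi fun _ : Fin n => gam d k) ≤
      ∫⁻ p, (ENNReal.ofReal (f p) + ENNReal.ofReal (rr i j a p ^ 2) * ENNReal.ofReal (g p) +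
        (ENNReal.ofReal (C / 8) + ENNReal.ofReal (C / 8) * ENNReal.ofReal (rr i j a p ^ 2)))
        ∂(Measure.pi fun _ : Fin n => gam d k) := by
    refine lintegral_mono fun p => ?_
    have hr0 : 0 < rr i j a p := Real.exp_pos _
    have h0 := hf0 p
    have h1 := hg0 p
    simp only
    rw [← ENNReal.ofReal_mul (by positivity), ← ENNReal.ofReal_mul (by positivity),
      ← ENNReal.ofReal_mul (by positivity), ← ENNReal.ofReal_add (by positivity) (by positivity),
      ← ENNReal.ofReal_add (by positivity) (by positivity),
      ← ENNReal.ofReal_add (by positivity) (by positivity)]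
    refine ENNReal.ofReal_le_ofReal ?_
    generalize rr i j a p = r at *
    have h2 := hfg p
    rcases le_total r 1 with h | h
    · have : r ^ 2 ≤ 1 := by nlinarith
      nlinarith [mul_nonneg h0 (sub_nonneg.2 this), mul_nonneg hC (sq_nonneg (3 * r - 1)),
        mul_nonneg (sub_nonneg.2 h2) (sq_nonneg r)]
    · have : 1 ≤ r ^ 2 := by nlinarith
      nlinarith [mul_nonneg h1 (sub_nonneg.2 this), mul_nonneg hC (sq_nonneg (r - 3))]
  rw [lintegral_const_mul _ (by fun_prop), lintegral_add_left (by fun_prop),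
    lintegral_add_left (by fun_prop), lintegral_add_left (by fun_prop),
    lintegral_const_mul _ (by fun_prop), ← hone] at key
  simp only [lintegral_const, measure_univ, mul_one] at key
  rw [← ENNReal.ofReal_add (by positivity) (by positivity)] at key
  have h3 := (mul_le_mul_right (affinity (d := d) n i j a) (ENNReal.ofReal (3 / 4 * C))).trans key
  rw [← ENNReal.ofReal_mul (by positivity)] at h3
  rw [← tsub_le_iff_right, ← ENNReal.ofReal_sub _ (by positivity)] at h3
  have h4 : C * (1 / 2 - 3 / 32 * (n * a ^ 2)) = 3 / 4 * C * (1 - n * a ^ 2 / 8) - (C / 8 + C / 8) := by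
    ring
  rw [h4]; exact h3

lemma two_point_lin {Ω : Type*} [MeasurableSpace Ω] (μ : Measure Ω) [IsProbabilityMeasure μ]
    {d k : ℕ} (n : ℕ) (i : Fin k) (j : Fin d) (a C σ : ℝ) (hC : 0 ≤ C)
    (A : Matrix (Fin d) (Fin d) ℝ) (W W' : Matrix (Fin k) (Fin d) ℝ)
    (hW : W' * A = W * A + Matrix.single i j (σ * a))
    (f g : Ω × (Fin n → (Fin d → ℝ) × (Fin k → ℝ)) → ℝ) (hf : Measurable f) (hg : Measurable g)
    (hf0 : ∀ p, 0 ≤ f p) (hg0 : ∀ p, 0 ≤ g p) (hfg : ∀ p, C ≤ f p + g p) :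
    ENNReal.ofReal (C * (1 / 2 - 3 / 32 * (n * a ^ 2))) ≤
      ∫⁻ p, ENNReal.ofReal (f p) ∂(μ.prod (Measure.pi fun _ : Fin n => linLaw d k σ A W)) +
      ∫⁻ p, ENNReal.ofReal (g p) ∂(μ.prod (Measure.pi fun _ : Fin n => linLaw d k σ A W')) := by
  let T : Matrix (Fin k) (Fin d) ℝ → (Fin d → ℝ) × (Fin k → ℝ) → (Fin d → ℝ) × (Fin k → ℝ) :=
    fun W zw => (A.mulVec zw.1, W.mulVec (A.mulVec zw.1) + σ • zw.2)
  have hT : ∀ W, Measurable (T W) := fun W => by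
    have : Continuous (T W) := by fun_prop
    exact this.measurable
  have hprob : ∀ W, IsProbabilityMeasure ((gam d k).map (T W)) := fun W =>
    Measure.isProbabilityMeasure_map (hT W).aemeasurable
  have hL : ∀ W, linLaw d k σ A W = (gam d k).map (T W) := fun W => rfl
  have hpi : ∀ W, (Measure.pi fun _ : Fin n => linLaw d k σ A W) =
      (Measure.pi fun _ : Fin n => gam d k).map (fun p l => T W (p l)) := fun W => by
    simp only [hL]
    exact (Measure.pi_map_pi (μ := fun _ : Fin n => gam d k) (f := fun _ => T W)
      (fun _ => (hT W).aemeasurable)).symm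
  have hTn : ∀ W, Measurable (fun (p : Fin n → (Fin d → ℝ) × (Fin k → ℝ)) l => T W (p l)) :=
    fun W => measurable_pi_lambda _ fun l => (hT W).comp (measurable_pi_apply l)
  have hsh : ∀ p, T W' p = T W (shiftMap i j a p) := by
    intro p
    simp only [T, shiftMap, Prod.mk.injEq, true_and]
    rw [Matrix.mulVec_mulVec, Matrix.mulVec_mulVec, hW, Matrix.add_mulVec, smul_add,
      add_assoc, add_comm (σ • p.2)]
    congr 2
    ext l
    by_cases h : l = i
    · subst h; simp [Matrix.mulVec, dotProduct, Matrix.single, mul_assoc]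
    · simp [h, Matrix.mulVec, dotProduct, Matrix.single, Pi.single_eq_of_ne h, Ne.symm h]
  have hpW : ∀ W, IsProbabilityMeasure (Measure.pi fun _ : Fin n => linLaw d k σ A W) := fun W => by
    simp only [hL]; infer_instance
  have := hpW W
  have := hpW W'
  rw [lintegral_prod _ (by fun_prop), lintegral_prod _ (by fun_prop),
    ← lintegral_add_left (Measurable.lintegral_prod_right' (f := fun p => ENNReal.ofReal (f p)) (by fun_prop))]
  calc _ = ∫⁻ _, ENNReal.ofReal (C * (1 / 2 - 3 / 32 * (n * a ^ 2))) ∂μ := by simp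
    _ ≤ _ := by
      refine lintegral_mono fun s => ?_
      simp only
      have hfs : Measurable fun t => f (s, t) := by fun_prop
      have hgs : Measurable fun t => g (s, t) := by fun_prop
      rw [hpi, hpi, lintegral_map (by fun_prop) (hTn W), lintegral_map (by fun_prop) (hTn W')]
      simp only [hsh]
      exact two_point_gam n i j a C hC (fun p => f (s, fun l => T W (p l)))
        (fun p => g (s, fun l => T W (p l))) (hfs.comp (hTn W)) (hgs.comp (hTn W))
        (fun _ => hf0 _) (fun _ => hg0 _) (fun _ => hfg _)

lemma rho_sq_eq {k d : ℕ} (SigT AT : Matrix (Fin d) (Fin d) ℝ) (hAT : AT * ATᵀ = SigT)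
    (W1 W2 : Matrix (Fin k) (Fin d) ℝ) :
    rho SigT W1 W2 ^ 2 = ∑ x : Fin k × Fin d, ((W1 * AT) x.1 x.2 - (W2 * AT) x.1 x.2) ^ 2 := by
  have h : ((W1 - W2) * SigT * (W1 - W2)ᵀ).trace =
      ∑ x : Fin k × Fin d, ((W1 * AT) x.1 x.2 - (W2 * AT) x.1 x.2) ^ 2 := by
    have : (W1 - W2) * SigT * (W1 - W2)ᵀ = ((W1 - W2) * AT) * ((W1 - W2) * AT)ᵀ := by
      rw [← hAT, Matrix.transpose_mul]; simp only [Matrix.mul_assoc]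
    rw [this, Fintype.sum_prod_type, Matrix.trace, Matrix.sub_mul]
    refine Finset.sum_congr rfl fun i _ => ?_
    simp only [Matrix.diag_apply, Matrix.mul_apply (M := W1 * AT - W2 * AT), Matrix.transpose_apply,
      Matrix.sub_apply, sq]
  rw [rho, Real.sq_sqrt, h]
  rw [h]; positivity

def sg (b : Bool) : ℝ := if b then 1 else -1

lemma sg_sq (b : Bool) : sg b ^ 2 = 1 := by cases b <;> simp [sg]
lemma sg_not (b : Bool) : sg (!b) = - sg b := by cases b <;> simp [sg]

def flipAt {ι : Type*} [DecidableEq ι] (x : ι) : Equiv.Perm (ι → Bool) :=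
  Function.Involutive.toPerm (fun e => Function.update e x (!e x)) (fun e => by simp)

lemma flipAt_apply {ι : Type*} [DecidableEq ι] (x : ι) (e : ι → Bool) :
    flipAt x e = Function.update e x (!e x) := rfl

/-- minimax lower bound in the moderate transfer-distance regime
(Lemma `b1`, second part, of the paper). -/
theorem minimax_lower_bound_moderate_distance
    (d k : ℕ) (hd : 1 ≤ d) (hk : 1 ≤ k) (σ : ℝ) (hσ : 0 < σ)
    (SigS SigT AS AT : Matrix (Fin d) (Fin d) ℝ)
    (hSS : SigS.PosSemidef) (hST : SigT.PosDef)
    (hAS : AS * ASᵀ = SigS) (hAT : AT * ATᵀ = SigT)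
    (D : ℝ) (hD : D = d * k - 1) (hD20 : 20 ≤ D)
    (nS nT : ℕ) (hnS : 1 ≤ nS) (hnT : 1 ≤ nT)
    (Δ : ℝ) (hΔ0 : 0 < Δ) (hΔ : Δ < Real.sqrt (σ ^ 2 * D * Real.log 2 / nT))
    (Wh : (Fin nS → (Fin d → ℝ) × (Fin k → ℝ)) × (Fin nT → (Fin d → ℝ) × (Fin k → ℝ)) →
      Fin k → Fin d → ℝ)
    (hWh : Measurable Wh) :
    ENNReal.ofReal ((1 / 100) * Δ ^ 2 * (1 - 0.8 * (nT * Δ ^ 2) / (σ ^ 2 * D))) ≤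
      ⨆ (WS : Matrix (Fin k) (Fin d) ℝ) (WT : Matrix (Fin k) (Fin d) ℝ)
        (_ : rho SigT WS WT ≤ Δ),
        ∫⁻ st, ENNReal.ofReal (rho SigT (Matrix.of (Wh st)) WT ^ 2)
          ∂((Measure.pi fun _ : Fin nS => linLaw d k σ AS WS).prod
            (Measure.pi fun _ : Fin nT => linLaw d k σ AT WT)) := by
  classical
  have hN : (0:ℝ) < d * k := by
    have : (1:ℝ) ≤ d := by exact_mod_cast hd
    have : (1:ℝ) ≤ k := by exact_mod_cast hk
    positivity
  obtain ⟨δ, hδ⟩ : ∃ δ, δ = Δ / Real.sqrt (d * k) := ⟨_, rfl⟩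
  have hδ2 : (d * k : ℝ) * δ ^ 2 = Δ ^ 2 := by
    rw [hδ, div_pow, Real.sq_sqrt hN.le]; field_simp
  have hδ0 : 0 ≤ δ := by rw [hδ]; positivity
  have hdet : IsUnit AT.det := by
    have h := hST.det_pos
    rw [← hAT, Matrix.det_mul, Matrix.det_transpose] at h
    exact isUnit_iff_ne_zero.2 fun h0 => by simp [h0] at h
  let U : (Fin k × Fin d → Bool) → Matrix (Fin k) (Fin d) ℝ :=
    fun e => Matrix.of fun i j => δ * sg (e (i, j))
  let W : (Fin k × Fin d → Bool) → Matrix (Fin k) (Fin d) ℝ := fun e => U e * AT⁻¹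
  have hWA : ∀ e, W e * AT = U e := fun e => by
    simp only [W]; rw [Matrix.mul_assoc, Matrix.nonsing_inv_mul _ hdet, Matrix.mul_one]
  have hball : ∀ e, rho SigT 0 (W e) ≤ Δ := fun e => by
    refine (sq_le_sq₀ (show 0 ≤ rho SigT 0 (W e) from Real.sqrt_nonneg _) hΔ0.le).1 ?_
    rw [rho_sq_eq SigT AT hAT, hWA]
    simp only [Matrix.zero_mul, Matrix.zero_apply, U, Matrix.of_apply, zero_sub, neg_sq, mul_pow,
      sg_sq, mul_one, Finset.sum_const, Finset.card_univ, Fintype.card_prod, Fintype.card_fin,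
      nsmul_eq_mul]
    rw [← hδ2]; push_cast; linarith
  obtain ⟨S, hS⟩ : ∃ S, S = ⨆ (WS : Matrix (Fin k) (Fin d) ℝ) (WT : Matrix (Fin k) (Fin d) ℝ)
        (_ : rho SigT WS WT ≤ Δ),
        ∫⁻ st, ENNReal.ofReal (rho SigT (Matrix.of (Wh st)) WT ^ 2)
          ∂((Measure.pi fun _ : Fin nS => linLaw d k σ AS WS).prod
            (Measure.pi fun _ : Fin nT => linLaw d k σ AT WT)) := ⟨_, rfl⟩
  rw [← hS]
  have hprobL : ∀ A W, IsProbabilityMeasure (linLaw d k σ A W) := fun A W => by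
    refine Measure.isProbabilityMeasure_map (Measurable.aemeasurable ?_)
    exact Continuous.measurable (by fun_prop)
  let V : (Fin nS → (Fin d → ℝ) × (Fin k → ℝ)) × (Fin nT → (Fin d → ℝ) × (Fin k → ℝ)) →
      Fin k × Fin d → ℝ := fun st x => (Matrix.of (Wh st) * AT) x.1 x.2
  have hV : ∀ x, Measurable fun st => V st x := fun x => by
    simp only [V, Matrix.mul_apply, Matrix.of_apply]
    fun_prop
  let Φ : Fin k × Fin d → (Fin k × Fin d → Bool) → ENNReal := fun x e =>
    ∫⁻ st, ENNReal.ofReal ((V st x - δ * sg (e x)) ^ 2)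
      ∂((Measure.pi fun _ : Fin nS => linLaw d k σ AS 0).prod
            (Measure.pi fun _ : Fin nT => linLaw d k σ AT (W e)))
  have hRisk : ∀ e, ∑ x, Φ x e ≤ S := fun e => by
    rw [hS]
    refine le_iSup_of_le 0 (le_iSup_of_le (W e) (le_iSup_of_le (hball e) ?_))
    simp only [Φ]
    rw [← lintegral_finsetSum _ (by fun_prop)]
    refine lintegral_mono fun st => ?_
    simp only
    rw [rho_sq_eq SigT AT hAT, hWA, ENNReal.ofReal_sum_of_nonneg (fun _ _ => sq_nonneg _)]
    exact le_rfl
  obtain ⟨c, hc⟩ : ∃ c, c = 2 * δ ^ 2 * (1 / 2 - 3 / 32 * (nT * (2 * δ / σ) ^ 2)) := ⟨_, rfl⟩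
  have hpair : ∀ x e, ENNReal.ofReal c ≤ Φ x e + Φ x (flipAt x e) := fun x e => by
    have h := two_point_lin (Measure.pi fun _ : Fin nS => linLaw d k σ AS 0) nT x.1 x.2
      (-(2 * δ * sg (e x) / σ)) (2 * δ ^ 2) σ (by positivity) AT (W e) (W (flipAt x e)) ?_
      (fun st => (V st x - δ * sg (e x)) ^ 2) (fun st => (V st x - δ * sg (flipAt x e x)) ^ 2)
      (by fun_prop) (by fun_prop) (fun _ => sq_nonneg _) (fun _ => sq_nonneg _) ?_
    · have h2 : (-(2 * δ * sg (e x) / σ)) ^ 2 = (2 * δ / σ) ^ 2 := by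
        rw [neg_sq, div_pow, mul_pow, sg_sq, mul_one, div_pow]
      rw [h2, ← hc] at h
      exact h
    · rw [hWA, hWA]
      ext i j
      by_cases hx : (i, j) = x
      · subst hx
        simp only [U, flipAt_apply, Matrix.of_apply, Matrix.add_apply, Matrix.single_apply_same,
          Function.update_self, sg_not]
        field_simp; ring
      · have : ¬ (x.1 = i ∧ x.2 = j) := fun h => hx (Prod.ext h.1.symm h.2.symm)
        simp [U, flipAt_apply, Matrix.single, this, Function.update_of_ne hx]
    · intro st
      simp only [flipAt_apply, Function.update_self, sg_not]
      nlinarith [sg_sq (e x), sq_nonneg (V st x)]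
  have hsum : ∀ x, (Fintype.card (Fin k × Fin d → Bool) : ENNReal) * ENNReal.ofReal c ≤
      2 * ∑ e, Φ x e := fun x => by
    rw [two_mul]
    nth_rewrite 2 [← Equiv.sum_comp (flipAt x) (Φ x)]
    rw [← Finset.sum_add_distrib]
    calc _ = ∑ e : (Fin k × Fin d → Bool), ENNReal.ofReal c := by simp
      _ ≤ _ := Finset.sum_le_sum fun e _ => hpair x e
  have hM0 : (Fintype.card (Fin k × Fin d → Bool) : ENNReal) ≠ 0 := by simp
  have hMt : (Fintype.card (Fin k × Fin d → Bool) : ENNReal) ≠ ⊤ := ENNReal.natCast_ne_top _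
  generalize hM : (Fintype.card (Fin k × Fin d → Bool) : ENNReal) = M at *
  have hfin : M * (((d * k : ℕ) : ENNReal) * ENNReal.ofReal c) ≤ M * (2 * S) := by
    calc M * (((d * k : ℕ) : ENNReal) * ENNReal.ofReal c)
        = ∑ x : Fin k × Fin d, M * ENNReal.ofReal c := by
          simp only [Finset.sum_const, Finset.card_univ, Fintype.card_prod, Fintype.card_fin,
            nsmul_eq_mul]
          push_cast; ring
      _ ≤ ∑ x : Fin k × Fin d, 2 * ∑ e, Φ x e := Finset.sum_le_sum fun x _ => hsum x
      _ = 2 * ∑ e, ∑ x, Φ x e := by rw [← Finset.mul_sum, Finset.sum_comm]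
      _ ≤ 2 * ∑ e : (Fin k × Fin d → Bool), S := by
          gcongr with e _; exact hRisk e
      _ = M * (2 * S) := by
          simp only [Finset.sum_const, Finset.card_univ, nsmul_eq_mul, hM]; ring
  have hfin2 := (ENNReal.mul_le_mul_iff_right hM0 hMt).1 hfin
  rw [← ENNReal.ofReal_natCast, ← ENNReal.ofReal_mul (by positivity)] at hfin2
  have h2S : ENNReal.ofReal (2 * ((1 / 100) * Δ ^ 2 * (1 - 0.8 * (nT * Δ ^ 2) / (σ ^ 2 * D)))) ≤
      2 * S := by
    refine le_trans (ENNReal.ofReal_le_ofReal ?_) hfin2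
    have hn0 : (0:ℝ) < nT := by exact_mod_cast hnT
    have hlog : Real.log 2 < 0.7 := by linarith [Real.log_two_lt_d9]
    have hΔ2 : Δ ^ 2 < σ ^ 2 * D * Real.log 2 / nT := (Real.lt_sqrt hΔ0.le).1 hΔ
    rw [lt_div_iff₀ hn0] at hΔ2
    have hD0 : 0 < D := by linarith
    have hu : nT * (2 * δ / σ) ^ 2 ≤ 2.8 := by
      rw [div_pow, ← mul_div_assoc, div_le_iff₀ (by positivity)]
      have h5 : D * (nT * δ ^ 2) ≤ D * (σ ^ 2 * 0.7) := by
        have : σ ^ 2 * D * Real.log 2 ≤ σ ^ 2 * D * 0.7 := by gcongr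
        have h6 : D * (nT * δ ^ 2) ≤ nT * Δ ^ 2 := by
          rw [← hδ2, hD]; nlinarith [mul_nonneg hn0.le (sq_nonneg δ)]
        nlinarith
      have := le_of_mul_le_mul_left h5 hD0
      nlinarith
    have hq : 0 ≤ 0.8 * (nT * Δ ^ 2) / (σ ^ 2 * D) := by positivity
    have hl : 2 * ((1 / 100) * Δ ^ 2 * (1 - 0.8 * (nT * Δ ^ 2) / (σ ^ 2 * D))) ≤ 2 / 100 * Δ ^ 2 := by
      nlinarith [mul_nonneg (sq_nonneg Δ) hq]
    refine hl.trans ?_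
    have : ((d * k : ℕ) : ℝ) * c = 2 * Δ ^ 2 * (1 / 2 - 3 / 32 * (nT * (2 * δ / σ) ^ 2)) := by
      rw [hc, ← hδ2]; push_cast; ring
    rw [this]
    nlinarith [mul_nonneg (sq_nonneg Δ) (sub_nonneg.2 hu)]
  rw [ENNReal.ofReal_mul (by norm_num), ENNReal.ofReal_ofNat] at h2S
  exact (ENNReal.mul_le_mul_iff_right (by norm_num) (by norm_num)).1 h2S
end
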